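/- Let φ : ℂ → ℂ be holomorphic and injective on the right half-plane ℍ = {z ∈ ℂ : Re z > 0}. Then for every real x > 1 and every y ∈ ℝ one has 1/(8x) ≤ |φ′(1 + iy)| / |φ′(x + iy)| ≤ 2x³; equivalently, |φ′(x + iy)|/(8x) ≤ |φ′(1 + iy)| ≤ 2x³·|φ′(x + iy)|. -/

import Mathlib

open Complex

/-! The quantity to control is the logarithmic derivative of `|φ'|` along horizontal lines.
Composing with the Cayley transform of the unit disk onto the half-plane, Bieberbach's bound
`|a₂| ≤ 2` gives `|t φ''(t + iy) + φ'(t + iy)| ≤ 2 |φ'(t + iy)|`, which says that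
`t³ |φ'(t + iy)|` increases and `|φ'(t + iy)| / t` decreases in `t`.

Bieberbach's bound follows from the area theorem for `z⁻¹ + q z` through the square-root transform.
For the area theorem, the image of a small circle of radius `ρ` is nearly the ellipse traced by
`z⁻¹ + b z`, `b = q' 0`, and no Jordan curve theorem is needed: the real-linear map
`w ↦ w - b ρ² conj w` straightens this ellipse, so that it sends the image of the annulus
`ρ < |z| < r` into a disk of radius `ρ⁻¹ + O(ρ²)`. Comparing areas, computed by the
change-of-variables formula and Parseval, and letting `ρ → 0` yields `|b| r² ≤ 1`. -/

section

open Filter MeasureTheory Metric Real Set Topology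

section CircleAverage

lemma norm_circleAverage_le {E : Type*} [NormedAddCommGroup E] [NormedSpace ℝ E]
    (f : ℂ → E) (c : ℂ) (R : ℝ) :
    ‖circleAverage f c R‖ ≤ circleAverage (fun z ↦ ‖f z‖) c R := by
  rw [circleAverage_def, circleAverage_def, norm_smul, norm_of_nonneg (by positivity), smul_eq_mul]
  gcongr
  exact intervalIntegral.norm_integral_le_integral_norm two_pi_pos.le

lemma sq_norm_le_circleAverage_sq_norm {f : ℂ → ℂ} {c : ℂ} {R : ℝ}
    (hf : DiffContOnCl ℂ f (ball c |R|)) :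
    ‖f c‖ ^ 2 ≤ circleAverage (fun z ↦ ‖f z‖ ^ 2) c R := by
  have mean_value : circleAverage (fun z ↦ f z • f z) c R = f c • f c := (hf.smul hf).circleAverage
  calc ‖f c‖ ^ 2 = ‖circleAverage (fun z ↦ f z • f z) c R‖ := by rw [mean_value, norm_smul, sq]
    _ ≤ circleAverage (fun z ↦ ‖f z • f z‖) c R := norm_circleAverage_le _ _ _
    _ = circleAverage (fun z ↦ ‖f z‖ ^ 2) c R := by simp only [norm_smul, sq]

lemma sq_norm_pow_of_mem_sphere {s : ℝ} {z : ℂ} (hz : z ∈ sphere 0 |s|) (n : ℕ) :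
    ‖z ^ n‖ ^ 2 = s ^ (2 * n) := by
  rw [norm_pow, mem_sphere_zero_iff_norm.1 hz, ← pow_mul, mul_comm, pow_mul, sq_abs, ← pow_mul]

lemma inner_inv_pow_of_mem_sphere {s : ℝ} {z : ℂ} (hz : z ∈ sphere 0 |s|) (w : ℂ) (n : ℕ) :
    inner ℝ w (z ^ n)⁻¹ = (s ^ (2 * n))⁻¹ * (z ^ n * w).re := by
  rw [Complex.inner, Complex.inv_def, normSq_eq_norm_sq, sq_norm_pow_of_mem_sphere hz,
    mul_right_comm, ← map_mul, re_mul_ofReal, conj_re, mul_comm]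

lemma circleAverage_re_pow_mul_eq_zero {p : ℂ → ℂ} {s : ℝ} (hp : DiffContOnCl ℂ p (ball 0 |s|))
    (hs : s ≠ 0) {n : ℕ} (hn : n ≠ 0) :
    CircleIntegrable (fun z ↦ (z ^ n * p z).re) 0 s ∧
      circleAverage (fun z ↦ (z ^ n * p z).re) 0 s = 0 := by
  have hd : DiffContOnCl ℂ (fun z ↦ z ^ n * p z) (ball 0 |s|) :=
    (by fun_prop : Differentiable ℂ fun z : ℂ ↦ z ^ n).diffContOnCl.smul hp
  have hc : ContinuousOn (fun z ↦ z ^ n * p z) (sphere 0 |s|) :=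
    hd.continuousOn.mono (closure_ball (0 : ℂ) (abs_ne_zero.2 hs) ▸ sphere_subset_closedBall)
  refine ⟨(continuous_re.comp_continuousOn hc).circleIntegrable', ?_⟩
  calc circleAverage (fun z ↦ (z ^ n * p z).re) 0 s
      = (circleAverage (fun z ↦ z ^ n * p z) 0 s).re :=
        reCLM.circleAverage_comp_comm hc.circleIntegrable'
    _ = 0 := by simp [hd.circleAverage, hn]

-- On the circle `(z ^ n)⁻¹` is the conjugate of `z ^ n / s ^ (2 * n)`, so it is orthogonal to `p`.
lemma circleAverage_sq_norm_sub_inv_pow {p : ℂ → ℂ} {s : ℝ} (hp : DiffContOnCl ℂ p (ball 0 |s|))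
    (hs : s ≠ 0) {n : ℕ} (hn : n ≠ 0) :
    circleAverage (fun z ↦ ‖p z - (z ^ n)⁻¹‖ ^ 2) 0 s =
      circleAverage (fun z ↦ ‖p z‖ ^ 2) 0 s + (s ^ (2 * n))⁻¹ := by
  obtain ⟨hint, hzero⟩ := circleAverage_re_pow_mul_eq_zero hp hs hn
  have hpc : ContinuousOn p (sphere 0 |s|) :=
    hp.continuousOn.mono (closure_ball (0 : ℂ) (abs_ne_zero.2 hs) ▸ sphere_subset_closedBall)
  have hp_int : CircleIntegrable (fun z ↦ ‖p z‖ ^ 2) 0 s := (hpc.norm.pow 2).circleIntegrable'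
  have expand : EqOn (fun z ↦ ‖p z - (z ^ n)⁻¹‖ ^ 2)
      (fun z ↦ (‖p z‖ ^ 2 - (2 * (s ^ (2 * n))⁻¹) • (z ^ n * p z).re) + (s ^ (2 * n))⁻¹)
      (sphere 0 |s|) := by
    intro z hz
    simp only [norm_sub_sq_real, inner_inv_pow_of_mem_sphere hz, norm_inv, inv_pow _ 2,
      sq_norm_pow_of_mem_sphere hz, smul_eq_mul, mul_assoc]
  have hcross_int : CircleIntegrable (fun z ↦ (2 * (s ^ (2 * n))⁻¹) • (z ^ n * p z).re) 0 s :=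
    hint.const_smul
  have hsub_int : CircleIntegrable
      (fun z ↦ ‖p z‖ ^ 2 - (2 * (s ^ (2 * n))⁻¹) • (z ^ n * p z).re) 0 s := hp_int.sub hcross_int
  rw [circleAverage_congr_sphere expand,
    circleAverage_fun_add hsub_int (circleIntegrable_const _ _ _),
    circleAverage_fun_sub hp_int hcross_int,
    circleAverage_fun_smul, hzero, smul_zero, sub_zero, circleAverage_const]

end CircleAverage

section PolarCoordinates

lemma polarCoord_symm_eq_circleMap (q : ℝ × ℝ) :
    Complex.polarCoord.symm q = circleMap 0 q.1 q.2 := by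
  simp [circleMap, exp_mul_I]

lemma lintegral_eq_lintegral_circleMap {F : ℂ → ENNReal} (hF : Measurable F) :
    ∫⁻ z, F z = ∫⁻ s in Ioi 0, ENNReal.ofReal s * ∫⁻ θ in Ioo (-π) π, F (circleMap 0 s θ) := by
  have hcircle : Measurable fun q : ℝ × ℝ ↦ circleMap 0 q.1 q.2 := by
    unfold circleMap; fun_prop
  calc ∫⁻ z, F z = ∫⁻ q in Ioi 0 ×ˢ Ioo (-π) π, ENNReal.ofReal q.1 * F (circleMap 0 q.1 q.2) := by
        simp only [← Complex.lintegral_comp_polarCoord_symm, polarCoord_symm_eq_circleMap,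
          smul_eq_mul, polarCoord_target]
    _ = ∫⁻ s in Ioi 0, ∫⁻ θ in Ioo (-π) π, ENNReal.ofReal s * F (circleMap 0 s θ) := by
        rw [Measure.volume_eq_prod, setLIntegral_prod _ (by fun_prop)]
    _ = _ := lintegral_congr fun s ↦
        lintegral_const_mul _ (hF.comp (hcircle.comp measurable_prodMk_left))

/-- The open annulus `ρ < ‖z‖ < r` centred at the origin; `annulus 0 r` is a punctured disk. -/
def annulus (ρ r : ℝ) : Set ℂ := norm ⁻¹' Ioo ρ r

lemma isOpen_annulus (ρ r : ℝ) : IsOpen (annulus ρ r) := isOpen_Ioo.preimage continuous_norm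

lemma setLIntegral_annulus {F : ℂ → ENNReal} (hF : Measurable F) {ρ : ℝ} (hρ : 0 ≤ ρ) (r : ℝ) :
    ∫⁻ z in annulus ρ r, F z =
      ∫⁻ s in Ioo ρ r, ENNReal.ofReal s * ∫⁻ θ in Ioo (-π) π, F (circleMap 0 s θ) := by
  have hA := (isOpen_annulus ρ r).measurableSet
  have hpos : Ioo ρ r ⊆ Ioi 0 := fun s hs ↦ hρ.trans_lt hs.1
  rw [← lintegral_indicator hA, lintegral_eq_lintegral_circleMap (hF.indicator hA),
    ← inter_eq_self_of_subset_left hpos, ← setLIntegral_indicator measurableSet_Ioo]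
  refine setLIntegral_congr_fun measurableSet_Ioi fun s hs ↦ ?_
  have hmem (θ : ℝ) : circleMap 0 s θ ∈ annulus ρ r ↔ s ∈ Ioo ρ r := by
    simp [annulus, abs_of_pos hs.out]
  by_cases hsr : s ∈ Ioo ρ r <;> simp [indicator, hmem, hsr]

lemma lintegral_circleMap_eq_circleAverage {g : ℂ → ℝ} {c : ℂ} {s : ℝ}
    (hg : CircleIntegrable g c s) (hg0 : ∀ z ∈ sphere c |s|, 0 ≤ g z) :
    ∫⁻ θ in Ioo (-π) π, ENNReal.ofReal (g (circleMap c s θ)) =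
      ENNReal.ofReal (2 * π * circleAverage g c s) := by
  have hshift : 2 * π * circleAverage g c s = ∫ θ in -π..π, g (circleMap c s θ) := by
    rw [circleAverage_eq_integral_add (-π), smul_eq_mul, mul_inv_cancel_left₀ two_pi_pos.ne',
      intervalIntegral.integral_comp_add_right (fun θ ↦ g (circleMap c s θ))]
    congr 1 <;> ring
  have hperiodic : Function.Periodic (fun θ ↦ g (circleMap c s θ)) (2 * π) :=
    (periodic_circleMap c s).comp g
  have hint : IntervalIntegrable (fun θ ↦ g (circleMap c s θ)) volume (-π) π :=
    hperiodic.intervalIntegrable₀ two_pi_pos.ne' hg _ _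
  have hpi : -π ≤ π := by linarith [pi_pos]
  rw [hshift, intervalIntegral.integral_of_le hpi, integral_Ioc_eq_integral_Ioo,
    ofReal_integral_eq_lintegral_ofReal]
  · exact (intervalIntegrable_iff_integrableOn_Ioo_of_le hpi).1 hint
  · exact .of_forall fun θ ↦ hg0 _ (circleMap_mem_sphere' c s θ)

end PolarCoordinates

section Area

lemma lintegral_mul_two_pi_mul_add_inv_pow_four {ρ r B : ℝ} (hρ : 0 < ρ) (hρr : ρ ≤ r)
    (hB : 0 ≤ B) :
    ∫⁻ s in Ioo ρ r, ENNReal.ofReal (s * (2 * π * (B + (s ^ 4)⁻¹))) =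
      ENNReal.ofReal (π * ((ρ ^ 2)⁻¹ - (r ^ 2)⁻¹ + B * (r ^ 2 - ρ ^ 2))) := by
  have hpos : ∀ s ∈ Icc ρ r, 0 < s := fun s hs ↦ hρ.trans_le hs.1
  have hcont : ContinuousOn (fun s ↦ s * (2 * π * (B + (s ^ 4)⁻¹))) (Icc ρ r) := by
    have : ∀ s ∈ Icc ρ r, s ^ 4 ≠ 0 := fun s hs ↦ pow_ne_zero 4 (hpos s hs).ne'
    fun_prop (disch := assumption)
  have hderiv : ∀ s ∈ uIcc ρ r, HasDerivAt (fun s : ℝ ↦ π * (B * s ^ 2 - (s ^ 2)⁻¹))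
      (s * (2 * π * (B + (s ^ 4)⁻¹))) s := by
    intro s hs
    have hs0 := (hpos s (uIcc_of_le hρr ▸ hs)).ne'
    refine ((((hasDerivAt_pow 2 s).const_mul B).sub
      ((hasDerivAt_pow 2 s).fun_inv (pow_ne_zero 2 hs0))).const_mul π).congr_deriv ?_
    field_simp
    ring
  rw [← ofReal_integral_eq_lintegral_ofReal (hcont.integrableOn_Icc.mono_set Ioo_subset_Icc_self),
    ← integral_Ioc_eq_integral_Ioo, ← intervalIntegral.integral_of_le hρr,
    intervalIntegral.integral_eq_sub_of_hasDerivAt hderiv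
      (ContinuousOn.intervalIntegrable (uIcc_of_le hρr ▸ hcont))]
  · congr 1
    ring
  · filter_upwards [ae_restrict_mem measurableSet_Ioo] with s hs
    have := hpos s (Ioo_subset_Icc_self hs)
    simp only [Pi.zero_apply]
    positivity

lemma circleAverage_sq_norm_sub_inv_sq_ge {p : ℂ → ℂ} {r s : ℝ}
    (hp : DifferentiableOn ℂ p (ball 0 r)) (hs : s ∈ Ioo 0 r) :
    CircleIntegrable (fun z ↦ ‖p z - (z ^ 2)⁻¹‖ ^ 2) 0 s ∧
    ‖p 0‖ ^ 2 + (s ^ 4)⁻¹ ≤ circleAverage (fun z ↦ ‖p z - (z ^ 2)⁻¹‖ ^ 2) 0 s := by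
  have hsr : closedBall (0 : ℂ) |s| ⊆ ball 0 r :=
    closedBall_subset_ball (by rw [abs_of_pos hs.1]; exact hs.2)
  have hp_disk : DiffContOnCl ℂ p (ball 0 |s|) := hp.diffContOnCl_ball hsr
  constructor
  · have hpc : ContinuousOn p (sphere 0 |s|) :=
      hp.continuousOn.mono (sphere_subset_closedBall.trans hsr)
    have hz : ∀ z ∈ sphere (0 : ℂ) |s|, z ^ 2 ≠ 0 := fun z hz ↦
      pow_ne_zero 2 (ne_of_mem_sphere hz (abs_ne_zero.2 hs.1.ne'))
    refine ContinuousOn.circleIntegrable' ?_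
    fun_prop (disch := assumption)
  · rw [circleAverage_sq_norm_sub_inv_pow hp_disk hs.1.ne' two_ne_zero]
    gcongr
    exact sq_norm_le_circleAverage_sq_norm hp_disk

lemma le_lintegral_annulus_sq_norm_sub_inv_sq {p : ℂ → ℂ} (hpm : Measurable p) {ρ r : ℝ}
    (hp : DifferentiableOn ℂ p (ball 0 r)) (hρ : 0 < ρ) (hρr : ρ ≤ r) :
    ENNReal.ofReal (π * ((ρ ^ 2)⁻¹ - (r ^ 2)⁻¹ + ‖p 0‖ ^ 2 * (r ^ 2 - ρ ^ 2))) ≤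
      ∫⁻ z in annulus ρ r, ENNReal.ofReal (‖p z - (z ^ 2)⁻¹‖ ^ 2) := by
  rw [setLIntegral_annulus (by fun_prop) hρ.le,
    ← lintegral_mul_two_pi_mul_add_inv_pow_four hρ hρr (sq_nonneg _)]
  refine setLIntegral_mono' measurableSet_Ioo fun s hs ↦ ?_
  have hs0 : s ∈ Ioo 0 r := ⟨hρ.trans hs.1, hs.2⟩
  obtain ⟨hint, hle⟩ := circleAverage_sq_norm_sub_inv_sq_ge hp hs0
  rw [lintegral_circleMap_eq_circleAverage hint fun _ _ ↦ sq_nonneg _, ENNReal.ofReal_mul hs0.1.le]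
  gcongr

lemma det_restrictScalars_toSpanSingleton (a : ℂ) :
    ((ContinuousLinearMap.toSpanSingleton ℂ a).restrictScalars ℝ).det = ‖a‖ ^ 2 := by
  simp [ContinuousLinearMap.det, LinearMap.det_restrictScalars, Algebra.norm_complex_eq,
    normSq_eq_norm_sq]

lemma volume_image_eq_lintegral_sq_norm_deriv {g : ℂ → ℂ} {S : Set ℂ} (hS : IsOpen S)
    (hg : DifferentiableOn ℂ g S) (hinj : InjOn g S) :
    volume (g '' S) = ∫⁻ z in S, ENNReal.ofReal (‖deriv g z‖ ^ 2) := by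
  have hfderiv : ∀ z ∈ S, HasFDerivWithinAt g
      ((ContinuousLinearMap.toSpanSingleton ℂ (deriv g z)).restrictScalars ℝ) S z := fun z hz ↦
    ((hg.differentiableAt (hS.mem_nhds hz)).hasDerivAt.hasFDerivAt.restrictScalars
      ℝ).hasFDerivWithinAt
  rw [← lintegral_abs_det_fderiv_eq_addHaar_image volume hS.measurableSet hfderiv hinj]
  refine setLIntegral_congr_fun hS.measurableSet fun z _ ↦ ?_
  rw [det_restrictScalars_toSpanSingleton, abs_of_nonneg (sq_nonneg _)]

lemma volume_image_sub_mul_conj (c : ℂ) (S : Set ℂ) :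
    volume ((fun w ↦ w - c * (starRingEnd ℂ) w) '' S) =
      ENNReal.ofReal |1 - ‖c‖ ^ 2| * volume S := by
  let T : ℂ →ₗ[ℝ] ℂ := LinearMap.id - LinearMap.mulLeft ℝ c ∘ₗ conjAe.toLinearMap
  have hdet : LinearMap.det T = 1 - ‖c‖ ^ 2 := by
    rw [← LinearMap.det_toMatrix basisOneI, Matrix.det_fin_two]
    simp [LinearMap.toMatrix_apply, T, Complex.sq_norm, normSq_apply]
    ring
  rw [← hdet]
  exact Measure.addHaar_image_linearMap volume T S

end Area

section AreaTheorem

lemma exists_norm_sub_sub_deriv_mul_le {f : ℂ → ℂ} {c : ℂ} {r R : ℝ}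
    (hf : DifferentiableOn ℂ f (ball c R)) (hrR : r < R) :
    ∃ C, 0 ≤ C ∧ ∀ z ∈ closedBall c r, ‖f z - f c - deriv f c * (z - c)‖ ≤ C * ‖z - c‖ ^ 2 := by
  rcases lt_or_ge r 0 with hr | hr
  · exact ⟨0, le_rfl, by simp [closedBall_eq_empty.2 hr]⟩
  have hball : ball c R ∈ 𝓝 c := ball_mem_nhds c (hr.trans_lt hrR)
  have hF := (differentiableOn_dslope hball).2 ((differentiableOn_dslope hball).2 hf)
  obtain ⟨C, hC⟩ := (isCompact_closedBall c r).exists_bound_of_continuousOn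
    (hF.continuousOn.mono (closedBall_subset_ball hrR))
  refine ⟨C, (norm_nonneg _).trans (hC c (mem_closedBall_self hr)), fun z hz ↦ ?_⟩
  have expand : f z - f c - deriv f c * (z - c) =
      (z - c) ^ 2 * dslope (dslope f c) c z := by
    have h1 := sub_smul_dslope f c z
    have h2 := sub_smul_dslope (dslope f c) c z
    simp only [smul_eq_mul, dslope_same] at h1 h2
    linear_combination -h1 - (z - c) * h2
  rw [expand, norm_mul, norm_pow, mul_comm]
  gcongr
  exact hC z hz

lemma inv_add_mul_sub_add_mul_sq_le {ρ s r B C : ℝ} (hρ : 0 < ρ) (hρs : ρ ≤ s) (hsr : s ≤ r)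
    (hB : 0 ≤ B) (hC : 0 ≤ C) (hsmall : 2 * r * (B + C * r) * ρ ≤ 1) :
    s⁻¹ + B * (s - ρ ^ 2 / s) + C * s ^ 2 ≤ ρ⁻¹ + C * ρ ^ 2 := by
  have hs : 0 < s := hρ.trans_le hρs
  have hr : 0 < r := hs.trans_le hsr
  have hle : (s + ρ) * (B + C * s) * ρ ≤ 1 := by
    refine le_trans ?_ hsmall
    gcongr
    linarith only [hρs, hsr]
  have factor : ρ⁻¹ + C * ρ ^ 2 - (s⁻¹ + B * (s - ρ ^ 2 / s) + C * s ^ 2) =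
      (s - ρ) * (1 - (s + ρ) * (B + C * s) * ρ) / (s * ρ) := by
    field_simp
    ring
  rw [← sub_nonneg, factor]
  exact div_nonneg (mul_nonneg (sub_nonneg.2 hρs) (sub_nonneg.2 hle)) (by positivity)

-- The map `w ↦ w - b * ρ ^ 2 * conj w` turns the ellipse `z⁻¹ + b * z`, `‖z‖ = ρ`, into the
-- circle of radius `ρ⁻¹`.
lemma norm_inv_add_sub_mul_conj_le {b q z : ℂ} {ρ r C : ℝ} (hρ : 0 < ρ) (hz : ‖z‖ ∈ Icc ρ r)
    (hC : 0 ≤ C) (hq : ‖q - b * z‖ ≤ C * ‖z‖ ^ 2)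
    (hsmall : 2 * r * (‖b‖ + C * r) * ρ ≤ 1) :
    ‖(z⁻¹ + q) - b * ρ ^ 2 * (starRingEnd ℂ) (z⁻¹ + q)‖ ≤
      ρ⁻¹ + (C + ‖b‖ * (‖b‖ + C * r) * r) * ρ ^ 2 := by
  obtain ⟨hρz, hzr⟩ := hz
  have hz0 : 0 < ‖z‖ := hρ.trans_le hρz
  have hr : 0 < r := hz0.trans_le hzr
  have hconj : (starRingEnd ℂ) z⁻¹ = z * ((‖z‖ ^ 2)⁻¹ : ℝ) := by
    rw [Complex.inv_def, map_mul, conj_conj, conj_ofReal, normSq_eq_norm_sq]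
  have split : (z⁻¹ + q) - b * ρ ^ 2 * (starRingEnd ℂ) (z⁻¹ + q) =
      z⁻¹ + b * z * ((1 - ρ ^ 2 / ‖z‖ ^ 2 : ℝ) : ℂ) + (q - b * z)
        - b * ρ ^ 2 * (starRingEnd ℂ) q := by
    rw [map_add, hconj]
    push_cast
    ring
  have hlin : ‖b * z * ((1 - ρ ^ 2 / ‖z‖ ^ 2 : ℝ) : ℂ)‖ = ‖b‖ * (‖z‖ - ρ ^ 2 / ‖z‖) := by
    have : 0 ≤ 1 - ρ ^ 2 / ‖z‖ ^ 2 := sub_nonneg.2 (div_le_one_of_le₀ (by gcongr) (by positivity))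
    rw [norm_mul, norm_mul, norm_real, norm_of_nonneg this]
    field_simp
  have hq_le : ‖q‖ ≤ (‖b‖ + C * r) * r := by
    calc ‖q‖ ≤ ‖q - b * z‖ + ‖b * z‖ := norm_le_norm_sub_add _ _
      _ ≤ C * ‖z‖ ^ 2 + ‖b‖ * ‖z‖ := by rw [norm_mul]; gcongr
      _ = (‖b‖ + C * ‖z‖) * ‖z‖ := by ring
      _ ≤ (‖b‖ + C * r) * r := by gcongr
  have hconj_q : ‖b * ρ ^ 2 * (starRingEnd ℂ) q‖ ≤ ‖b‖ * ρ ^ 2 * ((‖b‖ + C * r) * r) := by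
    rw [norm_mul, norm_mul, norm_pow, norm_real, norm_of_nonneg hρ.le, RCLike.norm_conj]
    gcongr
  calc ‖(z⁻¹ + q) - b * ρ ^ 2 * (starRingEnd ℂ) (z⁻¹ + q)‖
      ≤ ‖z‖⁻¹ + ‖b‖ * (‖z‖ - ρ ^ 2 / ‖z‖) + C * ‖z‖ ^ 2 + ‖b‖ * ρ ^ 2 * ((‖b‖ + C * r) * r) := by
        rw [split, ← norm_inv, ← hlin]
        exact (norm_sub_le _ _).trans (add_le_add
          ((norm_add₃_le).trans (by gcongr)) hconj_q)
    _ ≤ ρ⁻¹ + C * ρ ^ 2 + ‖b‖ * ρ ^ 2 * ((‖b‖ + C * r) * r) := by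
        exact add_le_add_left
          (inv_add_mul_sub_add_mul_sq_le hρ hρz hzr (norm_nonneg b) hC hsmall) _
    _ = _ := by ring

lemma one_sub_sq_mul_le_sq_of_injOn_inv_add {q : ℂ → ℂ} {c : ℂ} {ρ r L : ℝ}
    (hq : DifferentiableOn ℂ q (ball 0 r))
    (hinj : InjOn (fun z ↦ z⁻¹ + q z) (annulus ρ r)) (hρ : 0 < ρ) (hρr : ρ ≤ r) (hL : 0 ≤ L)
    (hmaps : ∀ z ∈ annulus ρ r, ‖(z⁻¹ + q z) - c * (starRingEnd ℂ) (z⁻¹ + q z)‖ ≤ L) :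
    (1 - ‖c‖ ^ 2) * ((ρ ^ 2)⁻¹ - (r ^ 2)⁻¹ + ‖deriv q 0‖ ^ 2 * (r ^ 2 - ρ ^ 2)) ≤ L ^ 2 := by
  set g := fun z ↦ z⁻¹ + q z
  have hderiv : ∀ z ∈ annulus ρ r, HasDerivAt g (deriv q z - (z ^ 2)⁻¹) z := by
    intro z hz
    have hz0 : z ≠ 0 := norm_pos_iff.1 (hρ.trans hz.1)
    have hzr : ball 0 r ∈ 𝓝 z := isOpen_ball.mem_nhds (mem_ball_zero_iff.2 hz.2)
    exact ((hasDerivAt_inv hz0).add (hq.differentiableAt hzr).hasDerivAt).congr_deriv (by ring)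
  have harea : volume (g '' annulus ρ r) =
      ∫⁻ z in annulus ρ r, ENNReal.ofReal (‖deriv q z - (z ^ 2)⁻¹‖ ^ 2) := by
    rw [volume_image_eq_lintegral_sq_norm_deriv (isOpen_annulus ρ r)
      (fun z hz ↦ (hderiv z hz).differentiableAt.differentiableWithinAt) hinj]
    exact setLIntegral_congr_fun (isOpen_annulus ρ r).measurableSet
      fun z hz ↦ by simp only [(hderiv z hz).deriv]
  have hsub : (fun w ↦ w - c * (starRingEnd ℂ) w) '' (g '' annulus ρ r) ⊆ closedBall 0 L := by
    rintro _ ⟨_, ⟨z, hz, rfl⟩, rfl⟩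
    exact mem_closedBall_zero_iff.2 (hmaps z hz)
  have hnonneg : 0 ≤ π * ((ρ ^ 2)⁻¹ - (r ^ 2)⁻¹ + ‖deriv q 0‖ ^ 2 * (r ^ 2 - ρ ^ 2)) := by
    have hsq : ρ ^ 2 ≤ r ^ 2 := by gcongr
    have := sub_nonneg.2 (inv_anti₀ (by positivity) hsq)
    have := sub_nonneg.2 hsq
    positivity
  have key : ENNReal.ofReal ((1 - ‖c‖ ^ 2) *
      (π * ((ρ ^ 2)⁻¹ - (r ^ 2)⁻¹ + ‖deriv q 0‖ ^ 2 * (r ^ 2 - ρ ^ 2)))) ≤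
      ENNReal.ofReal (L ^ 2 * π) := by
    calc _ ≤ ENNReal.ofReal |1 - ‖c‖ ^ 2| * volume (g '' annulus ρ r) := by
          rw [ENNReal.ofReal_mul' hnonneg, harea]
          gcongr
          · exact le_abs_self _
          · exact le_lintegral_annulus_sq_norm_sub_inv_sq (measurable_deriv q)
              (hq.deriv isOpen_ball) hρ hρr
      _ ≤ volume (closedBall (0 : ℂ) L) := by
          rw [← volume_image_sub_mul_conj]
          exact measure_mono hsub
      _ = ENNReal.ofReal (L ^ 2 * π) := by
          rw [Complex.volume_closedBall, ENNReal.ofReal_mul (sq_nonneg L), ENNReal.ofReal_pow hL,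
            ← NNReal.coe_real_pi, ENNReal.ofReal_coe_nnreal]
  rw [ENNReal.ofReal_le_ofReal_iff (by positivity), mul_left_comm, mul_comm _ π] at key
  exact le_of_mul_le_mul_left key pi_pos

lemma eventually_area_defect_le {q : ℂ → ℂ} {r R : ℝ} (hq : DifferentiableOn ℂ q (ball 0 R))
    (hq0 : q 0 = 0) (hinj : InjOn (fun z ↦ z⁻¹ + q z) (annulus 0 R)) (hr : 0 < r) (hrR : r < R) :
    ∃ M, ∀ᶠ ρ in 𝓝[>] (0 : ℝ),
      (1 - ‖deriv q 0‖ ^ 2 * ρ ^ 4) * (‖deriv q 0‖ ^ 2 * (r ^ 2 - ρ ^ 2) - (r ^ 2)⁻¹)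
        - ‖deriv q 0‖ ^ 2 * ρ ^ 2 ≤ 2 * M * ρ + M ^ 2 * ρ ^ 4 := by
  obtain ⟨C, hC, hremainder⟩ := exists_norm_sub_sub_deriv_mul_le hq hrR
  set b := deriv q 0
  set M := C + ‖b‖ * (‖b‖ + C * r) * r
  refine ⟨M, ?_⟩
  have hsmall : ∀ᶠ ρ in 𝓝[>] (0 : ℝ), 2 * r * (‖b‖ + C * r) * ρ < 1 :=
    nhdsWithin_le_nhds ((by fun_prop : Continuous fun ρ ↦ 2 * r * (‖b‖ + C * r) * ρ).continuousAt
      |>.eventually_lt_const (by simp))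
  filter_upwards [hsmall, Ioo_mem_nhdsGT hr] with ρ hρ_small ⟨hρ, hρr⟩
  have hbound : ∀ z ∈ annulus ρ r,
      ‖(z⁻¹ + q z) - b * ρ ^ 2 * (starRingEnd ℂ) (z⁻¹ + q z)‖ ≤ ρ⁻¹ + M * ρ ^ 2 := fun z hz ↦
    norm_inv_add_sub_mul_conj_le hρ (Ioo_subset_Icc_self hz) hC
      (by simpa [hq0] using hremainder z (mem_closedBall_zero_iff.2 hz.2.le)) hρ_small.le
  have harea := one_sub_sq_mul_le_sq_of_injOn_inv_add (hq.mono (ball_subset_ball hrR.le))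
    (hinj.mono (preimage_mono (Ioo_subset_Ioo hρ.le hrR.le))) hρ hρr.le (by positivity) hbound
  rw [norm_mul, norm_pow, norm_real, norm_of_nonneg hρ.le] at harea
  have hleft : (1 - (‖b‖ * ρ ^ 2) ^ 2) * ((ρ ^ 2)⁻¹ - (r ^ 2)⁻¹ + ‖b‖ ^ 2 * (r ^ 2 - ρ ^ 2)) =
      (ρ⁻¹) ^ 2 + ((1 - ‖b‖ ^ 2 * ρ ^ 4) * (‖b‖ ^ 2 * (r ^ 2 - ρ ^ 2) - (r ^ 2)⁻¹)
        - ‖b‖ ^ 2 * ρ ^ 2) := by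
    field_simp
    ring
  have hright : (ρ⁻¹ + M * ρ ^ 2) ^ 2 = (ρ⁻¹) ^ 2 + (2 * M * ρ + M ^ 2 * ρ ^ 4) := by
    field_simp
    ring
  rw [hleft, hright] at harea
  exact le_of_add_le_add_left harea

theorem norm_deriv_mul_sq_le_one_of_injOn_inv_add {q : ℂ → ℂ} {R : ℝ} (hR : 0 < R)
    (hq : DifferentiableOn ℂ q (ball 0 R)) (hq0 : q 0 = 0)
    (hinj : InjOn (fun z ↦ z⁻¹ + q z) (annulus 0 R)) :
    ‖deriv q 0‖ * R ^ 2 ≤ 1 := by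
  have hlt : ∀ r ∈ Ioo 0 R, ‖deriv q 0‖ * r ^ 2 ≤ 1 := by
    rintro r ⟨hr, hrR⟩
    obtain ⟨M, hM⟩ := eventually_area_defect_le hq hq0 hinj hr hrR
    have hlim : ‖deriv q 0‖ ^ 2 * r ^ 2 - (r ^ 2)⁻¹ ≤ 0 := by
      refine le_of_tendsto_of_tendsto ?_ ?_ hM
      · exact ((by fun_prop : Continuous fun ρ ↦ (1 - ‖deriv q 0‖ ^ 2 * ρ ^ 4) *
          (‖deriv q 0‖ ^ 2 * (r ^ 2 - ρ ^ 2) - (r ^ 2)⁻¹) -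
            ‖deriv q 0‖ ^ 2 * ρ ^ 2).tendsto' 0 _ (by simp)).mono_left nhdsWithin_le_nhds
      · exact ((by fun_prop : Continuous fun ρ ↦ 2 * M * ρ + M ^ 2 * ρ ^ 4).tendsto' 0 _
          (by simp)).mono_left nhdsWithin_le_nhds
    rw [← sq_le_one_iff₀ (by positivity), mul_pow, sq (r ^ 2), ← mul_assoc]
    rwa [sub_nonpos, ← one_div, le_div_iff₀ (by positivity)] at hlim
  have hcont : Continuous fun r ↦ ‖deriv q 0‖ * r ^ 2 := by fun_prop
  refine le_of_tendsto (hcont.continuousAt.tendsto.mono_left (nhdsWithin_le_nhds (s := Iio R))) ?_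
  filter_upwards [Ioo_mem_nhdsLT hR] using hlt

end AreaTheorem

section Bieberbach

lemma differentiableAt_of_pow_of_continuousAt {𝕜 E : Type*} [NontriviallyNormedField 𝕜]
    [CompleteSpace 𝕜] [NormedAddCommGroup E] [NormedSpace 𝕜 E] {f : E → 𝕜} {x : E} {n : ℕ}
    (hn : (n : 𝕜) ≠ 0) (hpow : DifferentiableAt 𝕜 (fun y ↦ f y ^ n) x) (hf : ContinuousAt f x)
    (hx : f x ≠ 0) : DifferentiableAt 𝕜 f x := by
  have hderiv : (n : 𝕜) * f x ^ (n - 1) ≠ 0 := mul_ne_zero hn (pow_ne_zero _ hx)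
  have hstrict := hasStrictDerivAt_pow n (f x)
  have hroot : ∀ᶠ y in 𝓝 x,
      HasStrictDerivAt.localInverse (· ^ n) _ (f x) hstrict hderiv (f y ^ n) = f y :=
    hf.eventually (hstrict.eventually_left_inverse hderiv)
  have hinverse := (hstrict.to_localInverse hderiv).hasDerivAt.differentiableAt
  exact (hinverse.comp x hpow).congr_of_eventuallyEq (hroot.mono fun y hy ↦ hy.symm)

lemma isSimplyConnected_of_convex {E : Type*} [AddCommGroup E] [Module ℝ E] [TopologicalSpace E]
    [ContinuousAdd E] [ContinuousSMul ℝ E] {s : Set E} (hs : Convex ℝ s) (hne : s.Nonempty) :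
    IsSimplyConnected s :=
  have := hs.contractibleSpace hne
  SimplyConnectedSpace.ofContractible s

lemma exists_differentiableOn_pow_eq {U : Set ℂ} (hU : IsSimplyConnected U) (hUo : IsOpen U)
    {g : ℂ → ℂ} (hg : DifferentiableOn ℂ g U) (hg0 : ∀ z ∈ U, g z ≠ 0) {n : ℕ} (hn : n ≠ 0) :
    ∃ f : ℂ → ℂ, DifferentiableOn ℂ f U ∧ ∀ z, f z ^ n = g z := by
  obtain ⟨f, hf, hpow⟩ := Complex.exists_continuousOn_pow_eq hU hUo hg.continuousOn
    (by rintro ⟨z, hz, h⟩; exact hg0 z hz h) hn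
  refine ⟨f, fun z hz ↦ DifferentiableAt.differentiableWithinAt ?_, hpow⟩
  refine differentiableAt_of_pow_of_continuousAt (n := n) (mod_cast hn) ?_
    (hf.continuousAt (hUo.mem_nhds hz)) fun h ↦ hg0 z hz ?_
  · simpa only [hpow] using hg.differentiableAt (hUo.mem_nhds hz)
  · rw [← hpow, h, zero_pow hn]

lemma deriv_deriv_eq_two_mul_deriv_dslope {f : ℂ → ℂ} {c : ℂ} {U : Set ℂ} (hU : U ∈ 𝓝 c)
    (hf : DifferentiableOn ℂ f U) : deriv (deriv f) c = 2 * deriv (dslope f c) c := by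
  have hF : AnalyticAt ℂ (dslope f c) c :=
    ((differentiableOn_dslope hU).2 hf).analyticAt hU
  have hfactor : f = fun z ↦ f c + (z - c) * dslope f c z := by
    ext z
    rw [← smul_eq_mul, sub_smul_dslope, add_sub_cancel]
  have hderiv : deriv f =ᶠ[𝓝 c] fun z ↦ dslope f c z + (z - c) * deriv (dslope f c) z := by
    filter_upwards [hF.eventually_analyticAt] with z hz
    conv_lhs => rw [hfactor]
    simpa using ((((hasDerivAt_id z).sub_const c).mul hz.differentiableAt.hasDerivAt).const_add
      (f c)).deriv
  rw [hderiv.deriv_eq]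
  have hsum := hF.differentiableAt.hasDerivAt.fun_add
    (((hasDerivAt_id' c).sub_const c).fun_mul hF.deriv.differentiableAt.hasDerivAt)
  rw [hsum.deriv]
  ring

lemma dslope_ne_zero_of_injOn {f : ℂ → ℂ} {c z : ℂ} {s : Set ℂ} (hinj : InjOn f s) (hc : c ∈ s)
    (hfc : deriv f c ≠ 0) (hz : z ∈ s) : dslope f c z ≠ 0 := by
  rcases eq_or_ne z c with rfl | hzc
  · rwa [dslope_same]
  · rw [dslope_of_ne _ hzc, slope_def_field]
    exact div_ne_zero (sub_ne_zero.2 (hinj.ne hz hc hzc)) (sub_ne_zero.2 hzc)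

lemma add_sq_mem_ball_of_norm_lt_sqrt {c z : ℂ} {R : ℝ} (hz : ‖z‖ < √R) :
    c + z ^ 2 ∈ ball c R := by
  rwa [mem_ball_iff_norm, add_sub_cancel_left, norm_pow, ← lt_sqrt (norm_nonneg z)]

lemma injOn_div_of_sq_mul_sub_eq {f V : ℂ → ℂ} {c : ℂ} {R : ℝ} (hinj : InjOn f (ball c R))
    (hV : ∀ z ∈ ball c R, V z ≠ 0)
    (hsq : ∀ z ∈ ball c R, V z ^ 2 * (f z - f c) = z - c) :
    InjOn (fun z ↦ V (c + z ^ 2) / z) (annulus 0 √R) := by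
  intro z hz w hw hzw
  have hz0 : z ≠ 0 := norm_pos_iff.1 hz.1
  have hw0 : w ≠ 0 := norm_pos_iff.1 hw.1
  have hzR := add_sq_mem_ball_of_norm_lt_sqrt (c := c) hz.2
  have hwR := add_sq_mem_ball_of_norm_lt_sqrt (c := c) hw.2
  have hinv : ∀ {u : ℂ}, u ≠ 0 → c + u ^ 2 ∈ ball c R →
      (V (c + u ^ 2) / u) ^ 2 * (f (c + u ^ 2) - f c) = 1 := fun {u} hu huR ↦ by
    rw [div_pow, div_mul_eq_mul_div, hsq _ huR, add_sub_cancel_left, div_self (pow_ne_zero 2 hu)]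
  have hf : f (c + z ^ 2) = f (c + w ^ 2) := by
    refine sub_left_injective (mul_left_cancel₀
      (pow_ne_zero 2 (div_ne_zero (hV _ hwR) hw0)) ?_ : f (c + z ^ 2) - f c = f (c + w ^ 2) - f c)
    rw [hinv hw0 hwR, ← hinv hz0 hzR, show V (c + z ^ 2) / z = V (c + w ^ 2) / w from hzw]
  rcases sq_eq_sq_iff_eq_or_eq_neg.1 (add_left_cancel (hinj hzR hwR hf)) with h | rfl
  · exact h
  · refine absurd hzw fun h ↦ div_ne_zero (hV _ hwR) hw0 ?_
    simp only [neg_sq, div_neg] at h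
    exact self_eq_neg.1 h.symm

lemma norm_deriv_mul_le_norm_of_injOn_div {V : ℂ → ℂ} {c : ℂ} {R : ℝ} (hR : 0 < R)
    (hV : DifferentiableOn ℂ V (ball c R)) (hVc : V c ≠ 0)
    (hinj : InjOn (fun z ↦ V (c + z ^ 2) / z) (annulus 0 √R)) :
    ‖deriv V c‖ * R ≤ ‖V c‖ := by
  have hcR : ball c R ∈ 𝓝 c := ball_mem_nhds c hR
  have hT : DifferentiableOn ℂ (fun z ↦ dslope V c (c + z ^ 2)) (ball 0 √R) :=
    ((differentiableOn_dslope hcR).2 hV).comp (by fun_prop) fun z hz ↦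
      add_sq_mem_ball_of_norm_lt_sqrt (mem_ball_zero_iff.1 hz)
  set q : ℂ → ℂ := fun z ↦ z * dslope V c (c + z ^ 2) / V c
  have hq' : deriv q 0 = deriv V c / V c := by
    have hT0 := (hT.differentiableAt (ball_mem_nhds 0 (sqrt_pos.2 hR))).hasDerivAt
    exact (((hasDerivAt_id' (0 : ℂ)).fun_mul hT0).div_const (V c)).deriv.trans (by simp)
  have hnormalized : EqOn (fun z ↦ (V c)⁻¹ * (V (c + z ^ 2) / z)) (fun z ↦ z⁻¹ + q z)
      (annulus 0 √R) := fun z hz ↦ by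
    have hz0 : z ≠ 0 := norm_pos_iff.1 hz.1
    have hslope := sub_smul_dslope V c (c + z ^ 2)
    rw [add_sub_cancel_left, smul_eq_mul] at hslope
    simp only [q]
    field_simp
    linear_combination -hslope
  have harea := norm_deriv_mul_sq_le_one_of_injOn_inv_add (sqrt_pos.2 hR)
    ((DifferentiableOn.fun_mul differentiableOn_id hT).div_const (V c)) (by simp)
    (hnormalized.injOn_iff.1 ((mul_right_injective₀ (inv_ne_zero hVc)).comp_injOn hinj))
  rw [hq', sq_sqrt hR.le, norm_div, div_mul_eq_mul_div] at harea
  exact (div_le_one (norm_pos_iff.2 hVc)).1 harea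

lemma norm_deriv_deriv_mul_le_of_injOn_ball_of_deriv_ne_zero {f : ℂ → ℂ} {c : ℂ} {R : ℝ}
    (hR : 0 < R) (hf : DifferentiableOn ℂ f (ball c R)) (hinj : InjOn f (ball c R))
    (hfc : deriv f c ≠ 0) : ‖deriv (deriv f) c‖ * R ≤ 4 * ‖deriv f c‖ := by
  have hc : c ∈ ball c R := mem_ball_self hR
  have hcR : ball c R ∈ 𝓝 c := isOpen_ball.mem_nhds hc
  set F := dslope f c with hFdef
  have hF : DifferentiableOn ℂ F (ball c R) := (differentiableOn_dslope hcR).2 hf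
  have hF0 : ∀ z ∈ ball c R, F z ≠ 0 := fun z ↦ dslope_ne_zero_of_injOn hinj hc hfc
  obtain ⟨V, hV, hVF⟩ := exists_differentiableOn_pow_eq
    (isSimplyConnected_of_convex (convex_ball c R) ⟨c, hc⟩) isOpen_ball (hF.inv hF0)
    (fun z hz ↦ inv_ne_zero (hF0 z hz)) two_ne_zero
  have hVF1 : ∀ z ∈ ball c R, V z ^ 2 * F z = 1 := fun z hz ↦ by
    rw [hVF, Pi.inv_apply, inv_mul_cancel₀ (hF0 z hz)]
  have hV0 : ∀ z ∈ ball c R, V z ≠ 0 := fun z hz h ↦ by simpa [h] using hVF1 z hz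
  have hbound := norm_deriv_mul_le_norm_of_injOn_div hR hV (hV0 c hc)
    (injOn_div_of_sq_mul_sub_eq hinj hV0 fun z hz ↦ by
      rw [← sub_smul_dslope f c z, smul_eq_mul, mul_left_comm, hVF1 z hz, mul_one])
  have hlogDeriv : V c * deriv F c = -2 * deriv V c * F c := by
    have hprod := ((hV.differentiableAt hcR).hasDerivAt.fun_pow 2).mul
      (hF.differentiableAt hcR).hasDerivAt
    have hconst := hprod.unique
      ((hasDerivAt_const c 1).congr_of_eventuallyEq (eventually_of_mem hcR hVF1))
    refine mul_left_cancel₀ (hV0 c hc) ?_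
    linear_combination hconst
  have hlogDeriv_norm : ‖V c‖ * ‖deriv F c‖ = 2 * ‖deriv V c‖ * ‖F c‖ := by
    simpa using congr_arg norm hlogDeriv
  rw [deriv_deriv_eq_two_mul_deriv_dslope hcR hf, ← dslope_same f c, ← hFdef, norm_mul,
    RCLike.norm_ofNat]
  refine le_of_mul_le_mul_left ?_ (norm_pos_iff.2 (hV0 c hc))
  calc ‖V c‖ * (2 * ‖deriv F c‖ * R) = 4 * ‖F c‖ * (‖deriv V c‖ * R) := by
        linear_combination 2 * R * hlogDeriv_norm
    _ ≤ 4 * ‖F c‖ * ‖V c‖ := by gcongr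
    _ = ‖V c‖ * (4 * ‖F c‖) := mul_comm _ _

lemma eventually_deriv_ne_zero_of_injOn {f : ℂ → ℂ} {c : ℂ} {U : Set ℂ} (hinj : InjOn f U)
    (hU : U ∈ 𝓝 c) (hf : DifferentiableOn ℂ f U) : ∀ᶠ z in 𝓝[≠] c, deriv f z ≠ 0 := by
  have hfc : AnalyticAt ℂ f c := hf.analyticAt hU
  refine hfc.deriv.eventually_eq_zero_or_eventually_ne_zero.resolve_left fun hzero ↦ ?_
  obtain ⟨ε, hε, hball⟩ := Metric.mem_nhds_iff.1 (inter_mem hzero hU)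
  have hconst : ∀ z ∈ ball c ε, z = c := fun z hz ↦
    hinj (hball hz).2 (mem_of_mem_nhds hU) <| isOpen_ball.is_const_of_deriv_eq_zero
      (convex_ball c ε).isPreconnected (hf.mono fun w hw ↦ (hball hw).2)
      (fun w hw ↦ (hball hw).1) hz (mem_ball_self hε)
  obtain ⟨z, hzc, hz⟩ := ((eventually_mem_nhdsWithin (s := {c}ᶜ)).and
    (nhdsWithin_le_nhds (ball_mem_nhds c hε))).exists
  exact hzc (hconst z hz)

theorem norm_deriv_deriv_mul_le_of_injOn_ball {f : ℂ → ℂ} {c : ℂ} {R : ℝ}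
    (hf : DifferentiableOn ℂ f (ball c R)) (hinj : InjOn f (ball c R)) :
    ‖deriv (deriv f) c‖ * R ≤ 4 * ‖deriv f c‖ := by
  rcases le_or_gt R 0 with hR | hR
  · exact (mul_nonpos_of_nonneg_of_nonpos (norm_nonneg _) hR).trans (by positivity)
  have hcR : ball c R ∈ 𝓝 c := ball_mem_nhds c hR
  have hfc : AnalyticAt ℂ f c := hf.analyticAt hcR
  have hleft : ContinuousAt (fun z ↦ ‖deriv (deriv f) z‖ * (R - dist z c)) c :=
    hfc.deriv.deriv.continuousAt.norm.mul (by fun_prop)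
  have hright : ContinuousAt (fun z ↦ 4 * ‖deriv f z‖) c :=
    hfc.deriv.continuousAt.norm.const_mul 4
  rw [← sub_zero R, ← dist_self c]
  refine le_of_tendsto_of_tendsto (b := 𝓝[≠] c)
    (hleft.tendsto.mono_left nhdsWithin_le_nhds) (hright.tendsto.mono_left nhdsWithin_le_nhds) ?_
  filter_upwards [eventually_deriv_ne_zero_of_injOn hinj hcR hf, nhdsWithin_le_nhds hcR]
    with z hz hzR
  have hsub : ball z (R - dist z c) ⊆ ball c R := ball_subset_ball' (by simp)
  exact norm_deriv_deriv_mul_le_of_injOn_ball_of_deriv_ne_zero (sub_pos.2 hzR) (hf.mono hsub)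
    (hinj.mono hsub) hz

end Bieberbach

section HalfPlane

lemma isOpen_setOf_re_pos : IsOpen {z : ℂ | 0 < z.re} :=
  isOpen_lt continuous_const continuous_re

/-- The Cayley transform of the unit disk onto the right half-plane, normalized to map `0` to
`a`. -/
noncomputable def cayleyAt (a ξ : ℂ) : ℂ := a.re * ((1 + ξ) / (1 - ξ)) + a.im * I

lemma cayleyAt_zero (a : ℂ) : cayleyAt a 0 = a := by
  simp [cayleyAt]

lemma one_sub_ne_zero_of_mem_ball {ξ : ℂ} (hξ : ξ ∈ ball 0 1) : 1 - ξ ≠ 0 := by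
  rintro h
  simp [← sub_eq_zero.1 h] at hξ

lemma re_one_add_div_one_sub (ξ : ℂ) :
    ((1 + ξ) / (1 - ξ)).re = (1 - ‖ξ‖ ^ 2) / normSq (1 - ξ) := by
  rw [div_re, ← add_div, Complex.sq_norm, normSq_apply ξ]
  simp only [add_re, one_re, sub_re, add_im, one_im, sub_im]
  ring

lemma mapsTo_cayleyAt {a : ℂ} (ha : 0 < a.re) :
    MapsTo (cayleyAt a) (ball 0 1) {z : ℂ | 0 < z.re} := fun ξ hξ ↦ by
  have hre : (cayleyAt a ξ).re = a.re * ((1 - ‖ξ‖ ^ 2) / normSq (1 - ξ)) := by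
    simp [cayleyAt, ← re_one_add_div_one_sub]
  have hnum : 0 < 1 - ‖ξ‖ ^ 2 :=
    sub_pos.2 (pow_lt_one₀ (norm_nonneg ξ) (mem_ball_zero_iff.1 hξ) two_ne_zero)
  rw [mem_ofPred, hre]
  exact mul_pos ha (div_pos hnum (normSq_pos.2 (one_sub_ne_zero_of_mem_ball hξ)))

lemma injOn_cayleyAt {a : ℂ} (ha : a.re ≠ 0) : InjOn (cayleyAt a) (ball 0 1) := by
  intro ξ hξ η hη h
  have hquot := mul_left_cancel₀ (ofReal_ne_zero.2 ha) (add_right_cancel h)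
  rw [div_eq_div_iff (one_sub_ne_zero_of_mem_ball hξ) (one_sub_ne_zero_of_mem_ball hη)] at hquot
  linear_combination hquot / 2

lemma hasDerivAt_cayleyAt {a ξ : ℂ} (hξ : 1 - ξ ≠ 0) :
    HasDerivAt (cayleyAt a) (2 * a.re / (1 - ξ) ^ 2) ξ := by
  have hquot := ((hasDerivAt_id' ξ).const_add 1).fun_div ((hasDerivAt_id' ξ).const_sub 1) hξ
  exact ((hquot.const_mul (a.re : ℂ)).add_const (a.im * I)).congr_deriv (by ring)

lemma hasDerivAt_comp_cayleyAt {φ : ℂ → ℂ} (hφ : DifferentiableOn ℂ φ {z : ℂ | 0 < z.re})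
    {a ξ : ℂ} (ha : 0 < a.re) (hξ : ξ ∈ ball 0 1) :
    HasDerivAt (φ ∘ cayleyAt a) (deriv φ (cayleyAt a ξ) * (2 * a.re / (1 - ξ) ^ 2)) ξ :=
  (hφ.differentiableAt (isOpen_setOf_re_pos.mem_nhds (mapsTo_cayleyAt ha hξ))).hasDerivAt.comp ξ
    (hasDerivAt_cayleyAt (one_sub_ne_zero_of_mem_ball hξ))

lemma deriv_deriv_comp_cayleyAt_zero {φ : ℂ → ℂ}
    (hφ : DifferentiableOn ℂ φ {z : ℂ | 0 < z.re}) {a : ℂ} (ha : 0 < a.re) :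
    deriv (deriv (φ ∘ cayleyAt a)) 0 = 4 * a.re * (a.re * deriv (deriv φ) a + deriv φ a) := by
  have hmem : (0 : ℂ) ∈ ball 0 1 := mem_ball_self one_pos
  have hderiv : deriv (φ ∘ cayleyAt a) =ᶠ[𝓝 0]
      fun ξ ↦ (deriv φ ∘ cayleyAt a) ξ * (2 * a.re / (1 - ξ) ^ 2) := by
    filter_upwards [isOpen_ball.mem_nhds hmem] with ξ hξ
    exact (hasDerivAt_comp_cayleyAt hφ ha hξ).deriv
  have hfactor : HasDerivAt (fun ξ : ℂ ↦ 2 * (a.re : ℂ) / (1 - ξ) ^ 2) (4 * (a.re : ℂ)) 0 :=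
    ((hasDerivAt_const (0 : ℂ) (2 * (a.re : ℂ))).fun_div
      (((hasDerivAt_id' (0 : ℂ)).const_sub 1).fun_pow 2) (by simp)).congr_deriv (by simp; ring)
  rw [hderiv.deriv_eq,
    ((hasDerivAt_comp_cayleyAt (hφ.deriv isOpen_setOf_re_pos) ha hmem).fun_mul hfactor).deriv,
    Function.comp_apply, cayleyAt_zero]
  ring

lemma norm_re_mul_deriv_deriv_add_deriv_le {φ : ℂ → ℂ}
    (hφ : DifferentiableOn ℂ φ {z : ℂ | 0 < z.re}) (hinj : InjOn φ {z : ℂ | 0 < z.re})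
    {a : ℂ} (ha : 0 < a.re) : ‖a.re * deriv (deriv φ) a + deriv φ a‖ ≤ 2 * ‖deriv φ a‖ := by
  have hBieberbach := norm_deriv_deriv_mul_le_of_injOn_ball
    (fun ξ hξ ↦ (hasDerivAt_comp_cayleyAt hφ ha hξ).differentiableAt.differentiableWithinAt)
    (hinj.comp (injOn_cayleyAt ha.ne') (mapsTo_cayleyAt ha))
  rw [deriv_deriv_comp_cayleyAt_zero hφ ha,
    (hasDerivAt_comp_cayleyAt hφ ha (mem_ball_self one_pos)).deriv, cayleyAt_zero] at hBieberbach
  simp only [sub_zero, one_pow, div_one, norm_mul, norm_real, RCLike.norm_ofNat,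
    norm_of_nonneg ha.le, mul_one] at hBieberbach
  refine le_of_mul_le_mul_left ?_ (show 0 < 4 * a.re by positivity)
  linear_combination hBieberbach

end HalfPlane

section RealVariable

open scoped RealInnerProductSpace

variable {E : Type*} [NormedAddCommGroup E] [InnerProductSpace ℝ E] {P P' : ℝ → E} {k : ℤ}

lemma hasDerivAt_sq_zpow_mul_norm {t : ℝ} (ht : t ≠ 0) (hP : HasDerivAt P (P' t) t) :
    HasDerivAt (fun t ↦ (t ^ k * ‖P t‖) ^ 2)
      (2 * (t ^ k) ^ 2 * t⁻¹ * (k * ‖P t‖ ^ 2 + t * ⟪P t, P' t⟫)) t := by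
  have hprod := ((hasDerivAt_zpow k t (.inl ht)).fun_pow 2).fun_mul hP.norm_sq
  simp only [mul_pow]
  refine hprod.congr_deriv ?_
  rw [zpow_sub_one₀ ht]
  field_simp
  ring

lemma monotoneOn_zpow_mul_norm (hP : ∀ t, 0 < t → HasDerivAt P (P' t) t)
    (h : ∀ t, 0 < t → 0 ≤ k * ‖P t‖ ^ 2 + t * ⟪P t, P' t⟫) :
    MonotoneOn (fun t ↦ t ^ k * ‖P t‖) (Ioi 0) := by
  have hderiv (t : ℝ) (ht : 0 < t) := hasDerivAt_sq_zpow_mul_norm (k := k) ht.ne' (hP t ht)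
  have hsq : MonotoneOn (fun t ↦ (t ^ k * ‖P t‖) ^ 2) (Ioi 0) := by
    refine monotoneOn_of_hasDerivWithinAt_nonneg (convex_Ioi 0)
      (fun t ht ↦ (hderiv t ht).continuousAt.continuousWithinAt)
      (fun t ht ↦ (hderiv t (interior_subset ht)).hasDerivWithinAt) fun t ht ↦ ?_
    have ht0 : 0 < t := interior_subset ht
    exact mul_nonneg (by positivity) (h t ht0)
  rintro s (hs : 0 < s) t (ht : 0 < t) hst
  exact (pow_le_pow_iff_left₀ (by positivity) (by positivity) two_ne_zero).1 (hsq hs ht hst)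

lemma antitoneOn_zpow_mul_norm (hP : ∀ t, 0 < t → HasDerivAt P (P' t) t)
    (h : ∀ t, 0 < t → k * ‖P t‖ ^ 2 + t * ⟪P t, P' t⟫ ≤ 0) :
    AntitoneOn (fun t ↦ t ^ k * ‖P t‖) (Ioi 0) := by
  have hderiv (t : ℝ) (ht : 0 < t) := hasDerivAt_sq_zpow_mul_norm (k := k) ht.ne' (hP t ht)
  have hsq : AntitoneOn (fun t ↦ (t ^ k * ‖P t‖) ^ 2) (Ioi 0) := by
    refine antitoneOn_of_hasDerivWithinAt_nonpos (convex_Ioi 0)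
      (fun t ht ↦ (hderiv t ht).continuousAt.continuousWithinAt)
      (fun t ht ↦ (hderiv t (interior_subset ht)).hasDerivWithinAt) fun t ht ↦ ?_
    have ht0 : 0 < t := interior_subset ht
    exact mul_nonpos_of_nonneg_of_nonpos (by positivity) (h t ht0)
  rintro s (hs : 0 < s) t (ht : 0 < t) hst
  exact (pow_le_pow_iff_left₀ (by positivity) (by positivity) two_ne_zero).1 (hsq hs ht hst)

lemma abs_sq_norm_add_mul_inner_le {u v : E} {t : ℝ} (h : ‖t • v + u‖ ≤ 2 * ‖u‖) :
    |‖u‖ ^ 2 + t * ⟪u, v⟫| ≤ 2 * ‖u‖ ^ 2 :=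
  calc |‖u‖ ^ 2 + t * ⟪u, v⟫| = |⟪u, t • v + u⟫| := by
        rw [inner_add_right, real_inner_smul_right, real_inner_self_eq_norm_sq, add_comm]
    _ ≤ ‖u‖ * ‖t • v + u‖ := abs_real_inner_le_norm _ _
    _ ≤ ‖u‖ * (2 * ‖u‖) := by gcongr
    _ = 2 * ‖u‖ ^ 2 := by ring

end RealVariable

section Distortion

variable {φ : ℂ → ℂ}

lemma hasDerivAt_deriv_horizontal (hφ : DifferentiableOn ℂ φ {z : ℂ | 0 < z.re}) (y : ℝ) {t : ℝ}
    (ht : 0 < t) :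
    HasDerivAt (fun t : ℝ ↦ deriv φ (t + y * I)) (deriv (deriv φ) (t + y * I)) t := by
  have hmem : ((t : ℂ) + y * I) ∈ {z : ℂ | 0 < z.re} := by simpa using ht
  have hφ' := (hφ.deriv isOpen_setOf_re_pos).differentiableAt (isOpen_setOf_re_pos.mem_nhds hmem)
  exact (hφ'.hasDerivAt.comp_add_const (t : ℂ) (y * I)).comp_ofReal

lemma abs_sq_norm_deriv_add_mul_inner_le (hφ : DifferentiableOn ℂ φ {z : ℂ | 0 < z.re})
    (hinj : InjOn φ {z : ℂ | 0 < z.re}) (y : ℝ) {t : ℝ} (ht : 0 < t) :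
    |‖deriv φ (t + y * I)‖ ^ 2 +
        t * inner ℝ (deriv φ (t + y * I)) (deriv (deriv φ) (t + y * I))| ≤
      2 * ‖deriv φ (t + y * I)‖ ^ 2 := by
  refine abs_sq_norm_add_mul_inner_le ?_
  have hre : ((t : ℂ) + y * I).re = t := by simp
  have h := norm_re_mul_deriv_deriv_add_deriv_le hφ hinj (hre.symm ▸ ht)
  rwa [hre, ← real_smul] at h

lemma monotoneOn_zpow_three_mul_norm_deriv (hφ : DifferentiableOn ℂ φ {z : ℂ | 0 < z.re})
    (hinj : InjOn φ {z : ℂ | 0 < z.re}) (y : ℝ) :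
    MonotoneOn (fun t : ℝ ↦ t ^ (3 : ℤ) * ‖deriv φ (t + y * I)‖) (Ioi 0) := by
  refine monotoneOn_zpow_mul_norm (fun t ↦ hasDerivAt_deriv_horizontal hφ y) fun t ht ↦ ?_
  have h := (abs_le.1 (abs_sq_norm_deriv_add_mul_inner_le hφ hinj y ht)).1
  push_cast
  linear_combination h

lemma antitoneOn_zpow_neg_one_mul_norm_deriv (hφ : DifferentiableOn ℂ φ {z : ℂ | 0 < z.re})
    (hinj : InjOn φ {z : ℂ | 0 < z.re}) (y : ℝ) :
    AntitoneOn (fun t : ℝ ↦ t ^ (-1 : ℤ) * ‖deriv φ (t + y * I)‖) (Ioi 0) := by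
  refine antitoneOn_zpow_mul_norm (fun t ↦ hasDerivAt_deriv_horizontal hφ y) fun t ht ↦ ?_
  have h := (abs_le.1 (abs_sq_norm_deriv_add_mul_inner_le hφ hinj y ht)).2
  push_cast
  linear_combination h

theorem halfplane_distortion_general (hφ : DifferentiableOn ℂ φ {z : ℂ | 0 < z.re})
    (hinj : InjOn φ {z : ℂ | 0 < z.re}) {s t : ℝ} (hs : 0 < s) (hst : s ≤ t) (y : ℝ) :
    ‖deriv φ (t + y * I)‖ / t ≤ ‖deriv φ (s + y * I)‖ / s ∧
      s ^ 3 * ‖deriv φ (s + y * I)‖ ≤ t ^ 3 * ‖deriv φ (t + y * I)‖ := by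
  have ht : 0 < t := hs.trans_le hst
  constructor
  · simpa only [zpow_neg_one, inv_mul_eq_div] using
      antitoneOn_zpow_neg_one_mul_norm_deriv hφ hinj y hs ht hst
  · exact_mod_cast monotoneOn_zpow_three_mul_norm_deriv hφ hinj y hs ht hst

end Distortion

end

/-- Half-plane Koebe distortion estimate (inequality (29) of the paper). -/
theorem halfplane_distortion (φ : ℂ → ℂ)
    (hdiff : DifferentiableOn ℂ φ {z : ℂ | 0 < z.re})
    (hinj : Set.InjOn φ {z : ℂ | 0 < z.re}) :
    ∀ x : ℝ, 1 < x → ∀ y : ℝ,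
      ‖deriv φ ((x : ℂ) + (y : ℂ) * Complex.I)‖ / (8 * x)
          ≤ ‖deriv φ ((1 : ℂ) + (y : ℂ) * Complex.I)‖ ∧
      ‖deriv φ ((1 : ℂ) + (y : ℂ) * Complex.I)‖
          ≤ 2 * x ^ 3 * ‖deriv φ ((x : ℂ) + (y : ℂ) * Complex.I)‖ := by
  intro x hx y
  have hx0 : 0 < x := one_pos.trans hx
  obtain ⟨hlower, hupper⟩ := halfplane_distortion_general hdiff hinj one_pos hx.le y
  simp only [ofReal_one, div_one, one_pow, one_mul] at hlower hupper
  constructor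
  · exact le_trans (by gcongr; linarith) hlower
  · refine hupper.trans ?_
    gcongr
    linarith [pow_pos hx0 3]
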